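/- arXiv:2108.00411 — 2 statements merged into one kernel-verified Lean document; each statement's English description precedes it below -/
import Mathlib

section
/- Let 1 ≤ q < ∞ and let b ∈ SV satisfy b(t²) ∼ b(t) on (0,∞), with associated functions B₀ and B∞. Assume there exist real numbers α < 0 < β such that u ↦ u^{−α}·B∞(u) is almost decreasing on (0,1] and u ↦ u^{−β}·B₀(u) is almost increasing on (0,1] (i.e. ρ_{B∞} < 0 < π_{B₀}). Then there is a constant C > 0 such that for every non-negative measurable function f on (0,∞): (∫₀^∞ (b(t)·∫_t^∞ f(s) ds)^q dt/(t·ℓ(t)))^{1/q} ≤ C·(∫₀^∞ (t·b(t)·f(t)·ℓ(t))^q dt/(t·ℓ(t)))^{1/q}. -/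
open Set MeasureTheory Real

/-- `f` is almost increasing on `S`: there is `C > 0` with `f s ≤ C * f t` whenever `s ≤ t` in `S`. -/
def AlmostIncreasingOn (f : ℝ → ℝ) (S : Set ℝ) : Prop :=
  ∃ C > (0:ℝ), ∀ s ∈ S, ∀ t ∈ S, s ≤ t → f s ≤ C * f t

/-- `f` is almost decreasing on `S`: there is `C > 0` with `f t ≤ C * f s` whenever `s ≤ t` in `S`. -/
def AlmostDecreasingOn (f : ℝ → ℝ) (S : Set ℝ) : Prop :=
  ∃ C > (0:ℝ), ∀ s ∈ S, ∀ t ∈ S, s ≤ t → f t ≤ C * f s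

/-- A measurable positive function `b` on `(0,∞)` is slowly varying if for every `ε > 0`,
`t ↦ t^ε * b t` is almost increasing and `t ↦ t^(-ε) * b t` is almost decreasing on `(0,∞)`. -/
def SlowlyVarying (b : ℝ → ℝ) : Prop :=
  Measurable b ∧ (∀ t ∈ Ioi (0:ℝ), 0 < b t) ∧
  ∀ ε > (0:ℝ), AlmostIncreasingOn (fun t => t ^ ε * b t) (Ioi 0) ∧
    AlmostDecreasingOn (fun t => t ^ (-ε) * b t) (Ioi 0)

/-- `f ∼ g` on `S`: there are `c, C > 0` with `c * g x ≤ f x ≤ C * g x` for all `x ∈ S`. -/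
def EquivOn (f g : ℝ → ℝ) (S : Set ℝ) : Prop :=
  ∃ c > (0:ℝ), ∃ C > (0:ℝ), ∀ x ∈ S, c * g x ≤ f x ∧ f x ≤ C * g x

/-- The associated function `B₀(u) = b(e^{1 - 1/u})`. -/
noncomputable def assocB0 (b : ℝ → ℝ) (u : ℝ) : ℝ := b (Real.exp (1 - 1 / u))

/-- The associated function `B∞(u) = b(e^{1/u - 1})`. -/
noncomputable def assocBinf (b : ℝ → ℝ) (u : ℝ) : ℝ := b (Real.exp (1 / u - 1))

/-- `ℓ(t) = 1 + |log t|`. -/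
noncomputable def ell (t : ℝ) : ℝ := 1 + |Real.log t|

/-- The sequence `λ_k`: `λ_k = e^{1 - e^{-k}}` for `k ≤ -1` and `λ_k = e^{e^k - 1}` for `k ≥ 0`. -/
noncomputable def lam (k : ℤ) : ℝ :=
  if k < 0 then Real.exp (1 - Real.exp (-(k : ℝ))) else Real.exp (Real.exp (k : ℝ) - 1)

/-!
Let `φ` be the primitive of `1 / (t ℓ(t))`, that is `log ℓ` on `[1,∞)` and `-log ℓ` on `(0,1]`.
With `u = 1 / ℓ(t)`, the assumptions on `B∞` and `B₀` say that `exp (α φ) b` is almost increasing on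
`[1,∞)` and `exp (-β φ) b` on `(0,1]`; hence `exp (-γ φ) b` is almost increasing on `(0,∞)` for
`γ = min (-α) β > 0`. Therefore `b(t) ∫_t^∞ f` is at most a constant times the integral of
`s b(s) f(s) ℓ(s)` against the kernel `exp (γ (φ(t) - φ(s)))`, `s > t`, for the measure
`ds / (s ℓ(s))`. In the variable `x = φ(t)` this measure is Lebesgue measure and both marginals of
the kernel are at most `∫₀^∞ exp (-γ x) dx = 1 / γ`, so the Schur test applies.
-/

open scoped ENNReal

section AlmostMonotone

variable {f g : ℝ → ℝ} {S T : Set ℝ}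

theorem AlmostIncreasingOn.congr (hf : AlmostIncreasingOn f S) (h : EqOn f g S) :
    AlmostIncreasingOn g S := by
  obtain ⟨C, hC, hf⟩ := hf
  refine ⟨C, hC, fun s hs t ht hst => ?_⟩
  rw [← h hs, ← h ht]
  exact hf s hs t ht hst

theorem AlmostIncreasingOn.comp_monotoneOn (hf : AlmostIncreasingOn f T) (hg : MonotoneOn g S)
    (hST : MapsTo g S T) : AlmostIncreasingOn (f ∘ g) S := by
  obtain ⟨C, hC, hf⟩ := hf
  exact ⟨C, hC, fun s hs t ht hst => hf _ (hST hs) _ (hST ht) (hg hs ht hst)⟩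

theorem AlmostDecreasingOn.comp_antitoneOn (hf : AlmostDecreasingOn f T) (hg : AntitoneOn g S)
    (hST : MapsTo g S T) : AlmostIncreasingOn (f ∘ g) S := by
  obtain ⟨C, hC, hf⟩ := hf
  exact ⟨C, hC, fun s hs t ht hst => hf _ (hST ht) _ (hST hs) (hg hs ht hst)⟩

theorem AlmostIncreasingOn.monotoneOn_mul (hf : AlmostIncreasingOn f S) (hg : MonotoneOn g S)
    (hf0 : ∀ t ∈ S, 0 ≤ f t) (hg0 : ∀ t ∈ S, 0 ≤ g t) :
    AlmostIncreasingOn (fun t => g t * f t) S := by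
  obtain ⟨C, hC, hf⟩ := hf
  refine ⟨C, hC, fun s hs t ht hst => ?_⟩
  calc g s * f s ≤ g t * (C * f t) :=
        mul_le_mul (hg hs ht hst) (hf s hs t ht hst) (hf0 s hs) (hg0 t ht)
    _ = C * (g t * f t) := by ring

theorem AlmostIncreasingOn.union {c : ℝ} (hS : AlmostIncreasingOn f S)
    (hT : AlmostIncreasingOn f T) (hf0 : ∀ t ∈ S ∪ T, 0 ≤ f t) (hSc : IsGreatest S c)
    (hTc : IsLeast T c) : AlmostIncreasingOn f (S ∪ T) := by
  obtain ⟨A, hA, hS⟩ := hS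
  obtain ⟨B, hB, hT⟩ := hT
  refine ⟨A + B + A * B, by positivity, fun s hs t ht hst => ?_⟩
  suffices f s ≤ A * f t ∨ f s ≤ B * f t ∨ f s ≤ A * B * f t by
    have hft := hf0 t ht
    have hAf := mul_nonneg hA.le hft
    have hBf := mul_nonneg hB.le hft
    have hABf := mul_nonneg (mul_pos hA hB).le hft
    rcases this with h | h | h <;> linarith
  have across (hs : s ∈ S) (ht : t ∈ T) : f s ≤ A * B * f t :=
    calc f s ≤ A * f c := hS s hs c hSc.1 (hSc.2 hs)
      _ ≤ A * (B * f t) := by gcongr; exact hT c hTc.1 t ht (hTc.2 ht)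
      _ = A * B * f t := by ring
  rcases hs with hs | hs <;> rcases ht with ht | ht
  · exact .inl (hS s hs t ht hst)
  · exact .inr (.inr (across hs ht))
  · obtain rfl : s = c := (hst.trans (hSc.2 ht)).antisymm (hTc.2 hs)
    exact .inl (hS s hSc.1 t ht hst)
  · exact .inr (.inl (hT s hs t ht hst))

theorem AlmostIncreasingOn.exp_neg_mul_of_le {γ δ : ℝ}
    (hf : AlmostIncreasingOn (fun t => exp (-δ * g t) * f t) S) (hg : MonotoneOn g S)
    (hf0 : ∀ t ∈ S, 0 ≤ f t) (hγδ : γ ≤ δ) :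
    AlmostIncreasingOn (fun t => exp (-γ * g t) * f t) S := by
  have hmono : MonotoneOn (fun t => exp ((δ - γ) * g t)) S := fun s hs t ht hst =>
    exp_le_exp.2 (mul_le_mul_of_nonneg_left (hg hs ht hst) (sub_nonneg.2 hγδ))
  refine (hf.monotoneOn_mul hmono (fun t ht => mul_nonneg (exp_pos _).le (hf0 t ht))
    fun t _ => (exp_pos _).le).congr fun t _ => ?_
  simp only [← mul_assoc, ← exp_add]
  ring_nf

end AlmostMonotone

section SchurTest

variable {X Y : Type*} [MeasurableSpace X] [MeasurableSpace Y] {μ : Measure X} {ν : Measure Y}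
  {q : ℝ}

theorem lintegral_mul_rpow_le_rpow_lintegral_mul (hq : 1 ≤ q) {w h : Y → ℝ≥0∞}
    (hw : Measurable w) (hh : Measurable h) :
    (∫⁻ y, w y * h y ∂ν) ^ q ≤ (∫⁻ y, w y ∂ν) ^ (q - 1) * ∫⁻ y, w y * h y ^ q ∂ν := by
  have hq0 : 0 < q := one_pos.trans_le hq
  have mean_le : ∫⁻ y, h y ∂ν.withDensity w ≤
      (∫⁻ y, h y ^ q ∂ν.withDensity w) ^ (1 / q) * (∫⁻ y, w y ∂ν) ^ (1 - 1 / q) := by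
    simpa [eLpNorm'] using eLpNorm'_le_eLpNorm'_mul_rpow_measure_univ (μ := ν.withDensity w)
      one_pos hq hh.aestronglyMeasurable
  rw [lintegral_withDensity_eq_lintegral_mul _ hw hh,
    lintegral_withDensity_eq_lintegral_mul _ hw (hh.pow_const q)] at mean_le
  calc (∫⁻ y, w y * h y ∂ν) ^ q
      ≤ ((∫⁻ y, w y * h y ^ q ∂ν) ^ (1 / q) * (∫⁻ y, w y ∂ν) ^ (1 - 1 / q)) ^ q :=
        ENNReal.rpow_le_rpow mean_le hq0.le
    _ = (∫⁻ y, w y ∂ν) ^ (q - 1) * ∫⁻ y, w y * h y ^ q ∂ν := by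
        rw [ENNReal.mul_rpow_of_nonneg _ _ hq0.le, ← ENNReal.rpow_mul, ← ENNReal.rpow_mul,
          one_div_mul_cancel hq0.ne', ENNReal.rpow_one, sub_mul, one_div_mul_cancel hq0.ne',
          one_mul, mul_comm]

theorem lintegral_rpow_lintegral_mul_le_of_schur [SFinite μ] [SFinite ν] (hq : 1 ≤ q)
    {k : X → Y → ℝ≥0∞} (hk : Measurable (Function.uncurry k)) {h : Y → ℝ≥0∞} (hh : Measurable h)
    {A B : ℝ≥0∞} (hA : ∀ᵐ x ∂μ, ∫⁻ y, k x y ∂ν ≤ A) (hB : ∀ᵐ y ∂ν, ∫⁻ x, k x y ∂μ ≤ B) :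
    ∫⁻ x, (∫⁻ y, k x y * h y ∂ν) ^ q ∂μ ≤ A ^ (q - 1) * B * ∫⁻ y, h y ^ q ∂ν := by
  have hkh : Measurable (Function.uncurry fun x y => k x y * h y ^ q) :=
    hk.mul ((hh.comp measurable_snd).pow_const q)
  calc ∫⁻ x, (∫⁻ y, k x y * h y ∂ν) ^ q ∂μ
      ≤ ∫⁻ x, A ^ (q - 1) * ∫⁻ y, k x y * h y ^ q ∂ν ∂μ := by
        refine lintegral_mono_ae (hA.mono fun x hx => ?_)
        refine (lintegral_mul_rpow_le_rpow_lintegral_mul hq hk.of_uncurry_left hh).trans ?_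
        gcongr
    _ = A ^ (q - 1) * ∫⁻ y, ∫⁻ x, k x y * h y ^ q ∂μ ∂ν := by
        rw [lintegral_const_mul _ hkh.lintegral_prod_right,
          lintegral_lintegral_swap hkh.aemeasurable]
    _ = A ^ (q - 1) * ∫⁻ y, (∫⁻ x, k x y ∂μ) * h y ^ q ∂ν := by
        simp only [lintegral_mul_const _ hk.of_uncurry_right]
    _ ≤ A ^ (q - 1) * ∫⁻ y, B * h y ^ q ∂ν := by
        gcongr A ^ (q - 1) * ?_
        refine lintegral_mono_ae (hB.mono fun y hy => ?_)
        gcongr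
    _ = A ^ (q - 1) * B * ∫⁻ y, h y ^ q ∂ν := by
        rw [lintegral_const_mul _ (hh.pow_const q), mul_assoc]

end SchurTest

section ExpIntegral

variable {γ : ℝ}

theorem lintegral_exp_mul_sub_Iic (hγ : 0 < γ) (c : ℝ) :
    ∫⁻ x in Iic c, ENNReal.ofReal (exp (γ * (x - c))) = ENNReal.ofReal γ⁻¹ := by
  have hexp (x : ℝ) : exp (γ * (x - c)) = exp (-(γ * c)) * exp (γ * x) := by
    rw [← exp_add]
    ring_nf
  simp only [hexp]
  rw [← ofReal_integral_eq_lintegral_ofReal ((integrableOn_exp_mul_Iic hγ c).const_mul _)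
      (.of_forall fun x => by positivity), integral_const_mul, integral_exp_mul_Iic hγ,
    mul_div_assoc', ← exp_add, neg_add_cancel, exp_zero, one_div]

theorem lintegral_exp_mul_sub_Ici (hγ : 0 < γ) (c : ℝ) :
    ∫⁻ x in Ici c, ENNReal.ofReal (exp (γ * (c - x))) = ENNReal.ofReal γ⁻¹ := by
  rw [← lintegral_exp_mul_sub_Iic hγ (-c), ← (Measure.measurePreserving_neg volume
    ).setLIntegral_comp_preimage_emb (MeasurableEquiv.neg ℝ).measurableEmbedding]
  simp [sub_eq_add_neg, add_comm]

end ExpIntegral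

section WeightedHardy

variable {φ φ' : ℝ → ℝ} {S : Set ℝ} {γ : ℝ}

/-- The measure `φ'(t) dt` on `S`. When `φ'` is the derivative of a monotone `φ`, it is the
pull-back of Lebesgue measure under `φ`. -/
noncomputable def derivMeasure (φ' : ℝ → ℝ) (S : Set ℝ) : Measure ℝ :=
  (volume.restrict S).withDensity fun t => ENNReal.ofReal (φ' t)

instance : SFinite (derivMeasure φ' S) := by
  unfold derivMeasure
  infer_instance

theorem lintegral_derivMeasure (hφ' : Measurable φ') (S : Set ℝ) (g : ℝ → ℝ≥0∞) :
    ∫⁻ t, g t ∂derivMeasure φ' S = ∫⁻ t in S, ENNReal.ofReal (φ' t) * g t :=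
  lintegral_withDensity_eq_lintegral_mul_non_measurable _ hφ'.ennreal_ofReal
    (.of_forall fun _ => ENNReal.ofReal_lt_top) g

theorem ae_derivMeasure_mem (hS : MeasurableSet S) : ∀ᵐ t ∂derivMeasure φ' S, t ∈ S :=
  (withDensity_absolutelyContinuous _ _).ae_le (ae_restrict_mem hS)

theorem setLIntegral_comp_derivMeasure (hS : MeasurableSet S) (hφ' : Measurable φ')
    (hderiv : ∀ t ∈ S, HasDerivWithinAt φ (φ' t) S t) (hmono : MonotoneOn φ S) {A : Set ℝ}
    (hA : MeasurableSet A) (g : ℝ → ℝ≥0∞) :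
    ∫⁻ t in A, g (φ t) ∂derivMeasure φ' S = ∫⁻ x in φ '' (A ∩ S), g x := by
  rw [lintegral_image_eq_lintegral_deriv_mul_of_monotoneOn (hA.inter hS)
      (fun t ht => (hderiv t ht.2).mono inter_subset_right) (hmono.mono inter_subset_right),
    ← Measure.restrict_restrict hA, derivMeasure]
  exact setLIntegral_withDensity_eq_setLIntegral_mul_non_measurable _ hφ'.ennreal_ofReal _ hA
    (.of_forall fun _ => ENNReal.ofReal_lt_top)

/-- The kernel `exp (γ (φ t - φ s))` on `t < s`, which dominates the Hardy operator with weight `v`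
when `exp (-γ φ) v` is almost increasing. -/
noncomputable def hardyKernel (φ : ℝ → ℝ) (γ t s : ℝ) : ℝ≥0∞ :=
  if t < s then ENNReal.ofReal (exp (γ * (φ t - φ s))) else 0

theorem measurable_hardyKernel (hφ : Measurable φ) (γ : ℝ) :
    Measurable (Function.uncurry (hardyKernel φ γ)) :=
  Measurable.ite (measurableSet_lt measurable_fst measurable_snd) (by fun_prop) (by fun_prop)

theorem lintegral_hardyKernel_right_le (hγ : 0 < γ) (hS : MeasurableSet S) (hφ' : Measurable φ')
    (hderiv : ∀ t ∈ S, HasDerivWithinAt φ (φ' t) S t) (hmono : MonotoneOn φ S) {t : ℝ}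
    (ht : t ∈ S) : ∫⁻ s, hardyKernel φ γ t s ∂derivMeasure φ' S ≤ ENNReal.ofReal γ⁻¹ :=
  calc ∫⁻ s, hardyKernel φ γ t s ∂derivMeasure φ' S
      = ∫⁻ s in Ioi t, ENNReal.ofReal (exp (γ * (φ t - φ s))) ∂derivMeasure φ' S :=
        lintegral_indicator measurableSet_Ioi _
    _ = ∫⁻ x in φ '' (Ioi t ∩ S), ENNReal.ofReal (exp (γ * (φ t - x))) :=
        setLIntegral_comp_derivMeasure hS hφ' hderiv hmono measurableSet_Ioi
          fun x => ENNReal.ofReal (exp (γ * (φ t - x)))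
    _ ≤ ∫⁻ x in Ici (φ t), ENNReal.ofReal (exp (γ * (φ t - x))) :=
        lintegral_mono_set (image_subset_iff.2 fun _ hs => hmono ht hs.2 (le_of_lt hs.1))
    _ = ENNReal.ofReal γ⁻¹ := lintegral_exp_mul_sub_Ici hγ _

theorem lintegral_hardyKernel_left_le (hγ : 0 < γ) (hS : MeasurableSet S) (hφ' : Measurable φ')
    (hderiv : ∀ t ∈ S, HasDerivWithinAt φ (φ' t) S t) (hmono : MonotoneOn φ S) {s : ℝ}
    (hs : s ∈ S) : ∫⁻ t, hardyKernel φ γ t s ∂derivMeasure φ' S ≤ ENNReal.ofReal γ⁻¹ :=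
  calc ∫⁻ t, hardyKernel φ γ t s ∂derivMeasure φ' S
      = ∫⁻ t in Iio s, ENNReal.ofReal (exp (γ * (φ t - φ s))) ∂derivMeasure φ' S :=
        lintegral_indicator measurableSet_Iio _
    _ = ∫⁻ x in φ '' (Iio s ∩ S), ENNReal.ofReal (exp (γ * (x - φ s))) :=
        setLIntegral_comp_derivMeasure hS hφ' hderiv hmono measurableSet_Iio
          fun x => ENNReal.ofReal (exp (γ * (x - φ s)))
    _ ≤ ∫⁻ x in Iic (φ s), ENNReal.ofReal (exp (γ * (x - φ s))) :=
        lintegral_mono_set (image_subset_iff.2 fun _ ht => hmono ht.2 hs (le_of_lt ht.1))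
    _ = ENNReal.ofReal γ⁻¹ := lintegral_exp_mul_sub_Iic hγ _

variable {v : ℝ → ℝ} {f : ℝ → ℝ≥0∞} {K : ℝ}

theorem mul_tail_le_lintegral_hardyKernel (hS : MeasurableSet S) (hφ : Measurable φ)
    (hφ' : Measurable φ') (hφ'_pos : ∀ t ∈ S, 0 < φ' t) (hv : Measurable v) (hf : Measurable f)
    (hK : 0 ≤ K)
    (hle : ∀ t ∈ S, ∀ s ∈ S, t ≤ s → exp (-γ * φ t) * v t ≤ K * (exp (-γ * φ s) * v s))
    {t : ℝ} (ht : t ∈ S) :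
    ENNReal.ofReal (v t) * ∫⁻ s in Ioi t ∩ S, f s ≤ ENNReal.ofReal K *
      ∫⁻ s, hardyKernel φ γ t s * (ENNReal.ofReal (v s) * f s / ENNReal.ofReal (φ' s))
        ∂derivMeasure φ' S := by
  have weight_le {s : ℝ} (hs : s ∈ S) (hts : t < s) :
      v t ≤ K * exp (γ * (φ t - φ s)) * v s :=
    calc v t = exp (γ * φ t) * (exp (-γ * φ t) * v t) := by
          rw [← mul_assoc, ← exp_add]
          simp
      _ ≤ exp (γ * φ t) * (K * (exp (-γ * φ s) * v s)) := by
          gcongr ?_ * ?_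
          exact hle t ht s hs hts.le
      _ = K * exp (γ * (φ t - φ s)) * v s := by
          rw [mul_sub, sub_eq_add_neg, exp_add]
          ring_nf
  have hk : Measurable (hardyKernel φ γ t) := (measurable_hardyKernel hφ γ).of_uncurry_left
  rw [lintegral_derivMeasure hφ', ← Measure.restrict_restrict measurableSet_Ioi,
    ← lintegral_const_mul _ hf, ← lintegral_const_mul _ (by fun_prop),
    ← lintegral_indicator measurableSet_Ioi]
  refine setLIntegral_mono' hS fun s hs => ?_
  by_cases hts : t < s
  swap
  · simp [hts]
  rw [indicator_of_mem (mem_Ioi.2 hts), hardyKernel, if_pos hts,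
    mul_left_comm (ENNReal.ofReal (φ' s)),
    ENNReal.mul_div_cancel (ENNReal.ofReal_pos.2 (hφ'_pos s hs)).ne' ENNReal.ofReal_ne_top,
    ← mul_assoc, ← mul_assoc, ← ENNReal.ofReal_mul hK,
    ← ENNReal.ofReal_mul (mul_nonneg hK (exp_pos _).le)]
  gcongr
  exact weight_le hs hts

theorem lintegral_rpow_mul_tail_le {q : ℝ} (hq : 1 ≤ q) (hγ : 0 < γ) (hS : MeasurableSet S)
    (hφ : Measurable φ) (hφ' : Measurable φ') (hφ'_pos : ∀ t ∈ S, 0 < φ' t)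
    (hderiv : ∀ t ∈ S, HasDerivWithinAt φ (φ' t) S t) (hmono : MonotoneOn φ S)
    (hv : Measurable v) (hf : Measurable f) (hK : 0 ≤ K)
    (hle : ∀ t ∈ S, ∀ s ∈ S, t ≤ s → exp (-γ * φ t) * v t ≤ K * (exp (-γ * φ s) * v s)) :
    ∫⁻ t, (ENNReal.ofReal (v t) * ∫⁻ s in Ioi t ∩ S, f s) ^ q ∂derivMeasure φ' S ≤
      ENNReal.ofReal (K * γ⁻¹) ^ q *
        ∫⁻ t, (ENNReal.ofReal (v t) * f t / ENNReal.ofReal (φ' t)) ^ q ∂derivMeasure φ' S := by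
  have hq0 : 0 ≤ q := zero_le_one.trans hq
  set μ := derivMeasure φ' S
  set h : ℝ → ℝ≥0∞ := fun s => ENNReal.ofReal (v s) * f s / ENNReal.ofReal (φ' s)
  set A := ENNReal.ofReal γ⁻¹
  have hk := measurable_hardyKernel hφ γ
  have hh : Measurable h := by fun_prop
  have hA : A ^ (q - 1) * A = A ^ q := by
    nth_rw 2 [← ENNReal.rpow_one A]
    rw [← ENNReal.rpow_add_of_nonneg _ _ (sub_nonneg.2 hq) zero_le_one, sub_add_cancel]
  calc ∫⁻ t, (ENNReal.ofReal (v t) * ∫⁻ s in Ioi t ∩ S, f s) ^ q ∂μ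
      ≤ ∫⁻ t, (ENNReal.ofReal K * ∫⁻ s, hardyKernel φ γ t s * h s ∂μ) ^ q ∂μ := by
        refine lintegral_mono_ae ((ae_derivMeasure_mem hS).mono fun t ht => ?_)
        gcongr ?_ ^ q
        exact mul_tail_le_lintegral_hardyKernel hS hφ hφ' hφ'_pos hv hf hK hle ht
    _ = ENNReal.ofReal K ^ q * ∫⁻ t, (∫⁻ s, hardyKernel φ γ t s * h s ∂μ) ^ q ∂μ := by
        simp only [ENNReal.mul_rpow_of_nonneg _ _ hq0]
        exact lintegral_const_mul _
          ((hk.mul (hh.comp measurable_snd)).lintegral_prod_right.pow_const q)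
    _ ≤ ENNReal.ofReal K ^ q * (A ^ (q - 1) * A * ∫⁻ s, h s ^ q ∂μ) := by
        gcongr
        exact lintegral_rpow_lintegral_mul_le_of_schur hq hk hh
          ((ae_derivMeasure_mem hS).mono fun t ht =>
            lintegral_hardyKernel_right_le hγ hS hφ' hderiv hmono ht)
          ((ae_derivMeasure_mem hS).mono fun s hs =>
            lintegral_hardyKernel_left_le hγ hS hφ' hderiv hmono hs)
    _ = ENNReal.ofReal (K * γ⁻¹) ^ q * ∫⁻ s, h s ^ q ∂μ := by
        rw [hA, ENNReal.ofReal_mul hK, ENNReal.mul_rpow_of_nonneg _ _ hq0, mul_assoc]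

theorem AlmostIncreasingOn.exists_weighted_hardy {q : ℝ} (hq : 1 ≤ q) (hγ : 0 < γ)
    (hS : MeasurableSet S) (hφ : Measurable φ) (hφ' : Measurable φ')
    (hφ'_pos : ∀ t ∈ S, 0 < φ' t) (hderiv : ∀ t ∈ S, HasDerivWithinAt φ (φ' t) S t)
    (hmono : MonotoneOn φ S) (hv : Measurable v)
    (hinc : AlmostIncreasingOn (fun t => exp (-γ * φ t) * v t) S) :
    ∃ C > (0 : ℝ), ∀ f : ℝ → ℝ≥0∞, Measurable f →
      (∫⁻ t, (ENNReal.ofReal (v t) * ∫⁻ s in Ioi t ∩ S, f s) ^ q ∂derivMeasure φ' S) ^ (1 / q) ≤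
        ENNReal.ofReal C * (∫⁻ t, (ENNReal.ofReal (v t) * f t / ENNReal.ofReal (φ' t)) ^ q
          ∂derivMeasure φ' S) ^ (1 / q) := by
  obtain ⟨K, hK, hle⟩ := hinc
  have hq0 : 0 < q := one_pos.trans_le hq
  refine ⟨K * γ⁻¹, by positivity, fun f hf => ?_⟩
  have power_le := lintegral_rpow_mul_tail_le hq hγ hS hφ hφ' hφ'_pos hderiv hmono hv hf hK.le hle
  refine (ENNReal.rpow_le_rpow power_le (by positivity)).trans_eq ?_
  rw [ENNReal.mul_rpow_of_nonneg _ _ (by positivity), ← ENNReal.rpow_mul,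
    mul_one_div_cancel hq0.ne', ENNReal.rpow_one]

end WeightedHardy

section LogScale

theorem mul_ell_pos {t : ℝ} (ht : 0 < t) : 0 < t * ell t := by
  unfold ell
  positivity

theorem measurable_inv_mul_ell : Measurable fun t => (t * ell t)⁻¹ := by
  unfold ell
  fun_prop

theorem lintegral_derivMeasure_inv_mul_ell (g : ℝ → ℝ≥0∞) :
    ∫⁻ t, g t ∂derivMeasure (fun t => (t * ell t)⁻¹) (Ioi 0) =
      ∫⁻ t in Ioi 0, g t / ENNReal.ofReal (t * ell t) := by
  rw [lintegral_derivMeasure measurable_inv_mul_ell]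
  refine setLIntegral_congr_fun measurableSet_Ioi fun t ht => ?_
  rw [ENNReal.ofReal_inv_of_pos (mul_ell_pos ht), mul_comm, div_eq_mul_inv]

/-- The primitive of `1 / (t ℓ(t))` on `(0,∞)` vanishing at `1`: it is `log ℓ` on `[1,∞)` and
`-log ℓ` on `(0,1]`. It is the variable in which `dt / (t ℓ(t))` becomes Lebesgue measure. Written
as an integral in `y = log t`, it is differentiable at `1` without gluing the two branches. -/
noncomputable def signedLogEll (t : ℝ) : ℝ := ∫ y in (0 : ℝ)..log t, (1 + |y|)⁻¹

theorem hasDerivAt_integral_inv_one_add_abs (x : ℝ) :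
    HasDerivAt (fun x => ∫ y in (0 : ℝ)..x, (1 + |y|)⁻¹) (1 + |x|)⁻¹ x :=
  (Continuous.integral_hasStrictDerivAt
    ((by fun_prop : Continuous fun y : ℝ => 1 + |y|).inv₀ fun y => by positivity) 0 x).hasDerivAt

theorem measurable_signedLogEll : Measurable signedLogEll := by
  have : Continuous fun x => ∫ y in (0 : ℝ)..x, (1 + |y|)⁻¹ :=
    continuous_iff_continuousAt.2 fun x => (hasDerivAt_integral_inv_one_add_abs x).continuousAt
  exact this.measurable.comp measurable_log

theorem hasDerivAt_signedLogEll {t : ℝ} (ht : 0 < t) :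
    HasDerivAt signedLogEll (t * ell t)⁻¹ t := by
  have := (hasDerivAt_integral_inv_one_add_abs (log t)).comp t (hasDerivAt_log ht.ne')
  rwa [mul_comm, ← mul_inv] at this

theorem monotoneOn_signedLogEll : MonotoneOn signedLogEll (Ioi 0) := by
  refine monotoneOn_of_hasDerivWithinAt_nonneg (convex_Ioi 0)
    (fun t ht => (hasDerivAt_signedLogEll ht).continuousAt.continuousWithinAt)
    (f' := fun t => (t * ell t)⁻¹) (fun t ht => ?_) fun t ht => ?_
  all_goals rw [interior_Ioi] at ht
  · exact (hasDerivAt_signedLogEll ht).hasDerivWithinAt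
  · exact (inv_pos.2 (mul_ell_pos ht)).le

theorem integral_inv_one_add_abs {x : ℝ} (hx : 0 ≤ x) :
    ∫ y in (0 : ℝ)..x, (1 + |y|)⁻¹ = log (1 + x) := by
  calc ∫ y in (0 : ℝ)..x, (1 + |y|)⁻¹ = ∫ y in (0 : ℝ)..x, (1 + y)⁻¹ := by
        refine intervalIntegral.integral_congr fun y hy => ?_
        rw [uIcc_of_le hx] at hy
        simp only [abs_of_nonneg hy.1]
    _ = ∫ y in (1 : ℝ)..1 + x, y⁻¹ := by simp
    _ = log (1 + x) := by rw [integral_inv_of_pos one_pos (by positivity), div_one]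

theorem signedLogEll_inv (t : ℝ) : signedLogEll t⁻¹ = -signedLogEll t := by
  have := intervalIntegral.integral_comp_neg (a := 0) (b := log t) fun y : ℝ => (1 + |y|)⁻¹
  simp only [abs_neg, neg_zero] at this
  rw [signedLogEll, signedLogEll, log_inv, intervalIntegral.integral_symm, this]

theorem signedLogEll_of_one_le {t : ℝ} (ht : 1 ≤ t) : signedLogEll t = log (1 + log t) :=
  integral_inv_one_add_abs (log_nonneg ht)

theorem signedLogEll_nonneg {t : ℝ} (ht : 1 ≤ t) : 0 ≤ signedLogEll t := by
  rw [signedLogEll_of_one_le ht]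
  exact log_nonneg (le_add_of_nonneg_right (log_nonneg ht))

theorem exp_signedLogEll_of_one_le {t : ℝ} (ht : 1 ≤ t) : exp (signedLogEll t) = 1 + log t := by
  rw [signedLogEll_of_one_le ht, exp_log (by linarith [log_nonneg ht])]

theorem signedLogEll_nonpos {t : ℝ} (ht : t ∈ Ioc (0 : ℝ) 1) : signedLogEll t ≤ 0 := by
  have := signedLogEll_nonneg (one_le_inv_iff₀.2 ht)
  rwa [signedLogEll_inv, neg_nonneg] at this

theorem exp_neg_signedLogEll_of_le_one {t : ℝ} (ht : t ∈ Ioc (0 : ℝ) 1) :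
    exp (-signedLogEll t) = 1 - log t := by
  rw [← signedLogEll_inv, exp_signedLogEll_of_one_le (one_le_inv_iff₀.2 ht), log_inv,
    sub_eq_add_neg]

end LogScale

section AssociatedFunctions

variable {b : ℝ → ℝ} {α β : ℝ}

theorem assocBinf_exp_neg_signedLogEll {t : ℝ} (ht : 1 ≤ t) :
    assocBinf b (exp (-signedLogEll t)) = b t := by
  rw [assocBinf, one_div, ← exp_neg, neg_neg, exp_signedLogEll_of_one_le ht, add_sub_cancel_left,
    exp_log (one_pos.trans_le ht)]

theorem assocB0_exp_signedLogEll {t : ℝ} (ht : t ∈ Ioc (0 : ℝ) 1) :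
    assocB0 b (exp (signedLogEll t)) = b t := by
  rw [assocB0, one_div, ← exp_neg, exp_neg_signedLogEll_of_le_one ht, sub_sub_cancel,
    exp_log ht.1]

theorem almostIncreasingOn_exp_mul_of_assocBinf
    (h : AlmostDecreasingOn (fun u => u ^ (-α) * assocBinf b u) (Ioc 0 1)) :
    AlmostIncreasingOn (fun t => exp (α * signedLogEll t) * b t) (Ici 1) := by
  have hIci : Ici (1 : ℝ) ⊆ Ioi 0 := Ici_subset_Ioi.2 one_pos
  have hanti : AntitoneOn (fun t => exp (-signedLogEll t)) (Ici 1) := fun s hs t ht hst =>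
    exp_le_exp.2 (neg_le_neg (monotoneOn_signedLogEll.mono hIci hs ht hst))
  have hmaps : MapsTo (fun t => exp (-signedLogEll t)) (Ici 1) (Ioc 0 1) := fun t ht =>
    ⟨exp_pos _, exp_le_one_iff.2 (neg_nonpos.2 (signedLogEll_nonneg ht))⟩
  refine (h.comp_antitoneOn hanti hmaps).congr fun t ht => ?_
  simp only [Function.comp_apply]
  rw [assocBinf_exp_neg_signedLogEll ht, ← exp_mul, neg_mul_neg, mul_comm α]

theorem almostIncreasingOn_exp_neg_mul_of_assocB0
    (h : AlmostIncreasingOn (fun u => u ^ (-β) * assocB0 b u) (Ioc 0 1)) :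
    AlmostIncreasingOn (fun t => exp (-β * signedLogEll t) * b t) (Ioc 0 1) := by
  have hmono : MonotoneOn (fun t => exp (signedLogEll t)) (Ioc 0 1) := fun s hs t ht hst =>
    exp_le_exp.2 (monotoneOn_signedLogEll hs.1 ht.1 hst)
  have hmaps : MapsTo (fun t => exp (signedLogEll t)) (Ioc 0 1) (Ioc 0 1) := fun t ht =>
    ⟨exp_pos _, exp_le_one_iff.2 (signedLogEll_nonpos ht)⟩
  refine (h.comp_monotoneOn hmono hmaps).congr fun t ht => ?_
  simp only [Function.comp_apply]
  rw [assocB0_exp_signedLogEll ht, ← exp_mul, mul_comm (-β)]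

theorem almostIncreasingOn_exp_neg_min_mul_signedLogEll (hb : ∀ t ∈ Ioi (0 : ℝ), 0 ≤ b t)
    (hBinf : AlmostDecreasingOn (fun u => u ^ (-α) * assocBinf b u) (Ioc 0 1))
    (hB0 : AlmostIncreasingOn (fun u => u ^ (-β) * assocB0 b u) (Ioc 0 1)) :
    AlmostIncreasingOn (fun t => exp (-min (-α) β * signedLogEll t) * b t) (Ioi 0) := by
  have hIci : Ici (1 : ℝ) ⊆ Ioi 0 := Ici_subset_Ioi.2 one_pos
  have hIoc : Ioc (0 : ℝ) 1 ⊆ Ioi 0 := Ioc_subset_Ioi_self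
  have near_zero := (almostIncreasingOn_exp_neg_mul_of_assocB0 hB0).exp_neg_mul_of_le
    (monotoneOn_signedLogEll.mono hIoc) (fun t ht => hb t (hIoc ht)) (min_le_right (-α) β)
  have near_infty := AlmostIncreasingOn.exp_neg_mul_of_le (δ := -α)
    (by simpa only [neg_neg] using almostIncreasingOn_exp_mul_of_assocBinf hBinf)
    (monotoneOn_signedLogEll.mono hIci) (fun t ht => hb t (hIci ht)) (min_le_left (-α) β)
  have hunion : Ioc (0 : ℝ) 1 ∪ Ici 1 = Ioi 0 := Ioc_union_Ici_eq_Ioi one_pos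
  rw [← hunion]
  refine near_zero.union near_infty (fun t ht => ?_) (isGreatest_Ioc one_pos) isLeast_Ici
  exact mul_nonneg (exp_pos _).le (hb t (hunion ▸ ht))

end AssociatedFunctions

theorem limiting_hardy_inequality_ii_general {q : ℝ} (hq : 1 ≤ q) {b : ℝ → ℝ}
    (hbm : Measurable b) (hb : ∀ t ∈ Ioi (0 : ℝ), 0 ≤ b t) {α β : ℝ} (hα : α < 0) (hβ : 0 < β)
    (hBinf : AlmostDecreasingOn (fun u => u ^ (-α) * assocBinf b u) (Ioc 0 1))
    (hB0 : AlmostIncreasingOn (fun u => u ^ (-β) * assocB0 b u) (Ioc 0 1)) :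
    ∃ C > (0 : ℝ), ∀ f : ℝ → ℝ≥0∞, Measurable f →
      (∫⁻ t in Ioi (0 : ℝ),
          (ENNReal.ofReal (b t) * ∫⁻ s in Ioi t, f s) ^ q
            / ENNReal.ofReal (t * ell t)) ^ (1 / q)
        ≤ ENNReal.ofReal C *
          (∫⁻ t in Ioi (0 : ℝ),
            (ENNReal.ofReal (t * b t * ell t) * f t) ^ q
              / ENNReal.ofReal (t * ell t)) ^ (1 / q) := by
  obtain ⟨C, hC, hardy⟩ :=
    (almostIncreasingOn_exp_neg_min_mul_signedLogEll hb hBinf hB0).exists_weighted_hardy hq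
      (lt_min (neg_pos.2 hα) hβ) measurableSet_Ioi measurable_signedLogEll measurable_inv_mul_ell
      (fun t ht => inv_pos.2 (mul_ell_pos ht))
      (fun t ht => (hasDerivAt_signedLogEll ht).hasDerivWithinAt) monotoneOn_signedLogEll hbm
  refine ⟨C, hC, fun f hf => ?_⟩
  have tail_eq {t : ℝ} (ht : t ∈ Ioi 0) : Ioi t ∩ Ioi 0 = Ioi t :=
    inter_eq_left.2 (Ioi_subset_Ioi (le_of_lt ht))
  have weight_eq {t : ℝ} (ht : t ∈ Ioi 0) : ENNReal.ofReal (b t) * f t /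
      ENNReal.ofReal (t * ell t)⁻¹ = ENNReal.ofReal (t * b t * ell t) * f t := by
    have hpos := mul_ell_pos ht
    rw [ENNReal.ofReal_inv_of_pos hpos, div_eq_mul_inv, inv_inv, mul_right_comm t,
      ENNReal.ofReal_mul hpos.le]
    ring
  refine (le_of_eq_of_le ?_ (hardy f hf)).trans_eq ?_
  · rw [lintegral_derivMeasure_inv_mul_ell]
    congr 1
    exact setLIntegral_congr_fun measurableSet_Ioi fun t ht => by simp only [tail_eq ht]
  · rw [lintegral_derivMeasure_inv_mul_ell]
    congr 2
    exact setLIntegral_congr_fun measurableSet_Ioi fun t ht => by simp only [weight_eq ht]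

theorem limiting_hardy_inequality_ii (q : ℝ) (hq : 1 ≤ q) (b : ℝ → ℝ)
    (hb : SlowlyVarying b) (hsq : EquivOn (fun t => b (t ^ 2)) b (Ioi 0))
    (α β : ℝ) (hα : α < 0) (hβ : 0 < β)
    (hBinf : AlmostDecreasingOn (fun u => u ^ (-α) * assocBinf b u) (Ioc 0 1))
    (hB0 : AlmostIncreasingOn (fun u => u ^ (-β) * assocB0 b u) (Ioc 0 1)) :
    ∃ C > (0:ℝ), ∀ f : ℝ → ℝ, Measurable f → (∀ t, 0 ≤ f t) →
      (∫⁻ t in Ioi (0:ℝ),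
          (ENNReal.ofReal (b t) * ∫⁻ s in Ioi t, ENNReal.ofReal (f s)) ^ q
            / ENNReal.ofReal (t * ell t)) ^ (1 / q)
        ≤ ENNReal.ofReal C *
          (∫⁻ t in Ioi (0:ℝ),
            ENNReal.ofReal (t * b t * f t * ell t) ^ q
              / ENNReal.ofReal (t * ell t)) ^ (1 / q) := by
  obtain ⟨C, hC, hardy⟩ := limiting_hardy_inequality_ii_general hq hb.1
    (fun t ht => (hb.2.1 t ht).le) hα hβ hBinf hB0
  exact ⟨C, hC, fun f hf hf0 => by
    simpa only [← ENNReal.ofReal_mul' (hf0 _), mul_right_comm _ (ell _)] using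
      hardy _ hf.ennreal_ofReal⟩
end

section
/- Let 1 ≤ q < ∞, 0 ≤ θ ≤ 1, let b ∈ SV, and let φ ∈ SV satisfy φ(t²) ∼ φ(t) on (0,∞), with associated functions Φ₀ and Φ∞. Assume there exist real numbers α < 0 < β such that u ↦ u^{−α}·Φ∞(u) is almost decreasing on (0,1] and u ↦ u^{−β}·Φ₀(u) is almost increasing on (0,1] (i.e. ρ_{Φ∞} < 0 < π_{Φ₀}). Then there exist constants c, C > 0 such that for every function k:(0,∞)→[0,∞) which is increasing and such that t ↦ k(t)/t is decreasing (i.e. k quasi-concave; in particular k(·) = K(·,f) for a K-functional): c·(∫₀^∞ (t^{−θ}·b(t)·k(t))^q dt/t)^{1/q} ≤ (∫₀^∞ (φ(t)^{−θ}·b(φ(t))·k(φ(t)))^q dt/(t·ℓ(t)))^{1/q} ≤ C·(∫₀^∞ (t^{−θ}·b(t)·k(t))^q dt/t)^{1/q}, the constants being independent of k. -/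
open Set MeasureTheory Real

/-!
In the coordinates `t = exp (sinh x)` on the domain of `φ` and `s = exp y` on its range, the
measures `dt / (t ℓ(t))` and `ds / s` are comparable to `dx` and equal to `dy`, and `φ` becomes
`ψ x = log (φ (exp (sinh x)))`. The index conditions on `Φ₀` and `Φ∞` say that `ψ` grows at least
linearly up to a bounded error. Since `sinh (x + 1) ≤ 4 * sinh x` for `x ≥ 1`, two applications of
`φ(t²) ∼ φ(t)` show that the increments of `ψ` along the integers are bounded above. Hence the
relation `|ψ x - y| ≤ r` has, for large `r`, sections of measure bounded above and below in both
variables. The integrand `(s^(-θ) b(s) k(s))^q` changes at most by a constant factor, uniformly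
in `k`, when `log s` moves by at most `r`, so Tonelli's theorem on this relation compares the two
integrals.
-/

/-- `f (e^y)` changes by at most a factor `C e^{ε|y - z|}` between `y` and `z`: both `t^ε * f t` is
almost increasing and `t^(-ε) * f t` is almost decreasing, with the constant `C` made explicit so
that estimates can be uniform in `f`. -/
def IsPowerControlled (C ε : ℝ) (f : ℝ → ℝ) : Prop :=
  ∀ s ∈ Ioi (0 : ℝ), ∀ t ∈ Ioi (0 : ℝ), f s ≤ C * exp (ε * |log s - log t|) * f t

/-- The monotone half of a quasi-isometry: `ψ` grows at rate at least `γ` on `S`, up to an additive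
error `A`. -/
def CoarselyExpandingOn (γ A : ℝ) (ψ : ℝ → ℝ) (S : Set ℝ) : Prop :=
  ∀ x ∈ S, ∀ y ∈ S, x ≤ y → γ * (y - x) - A ≤ ψ y - ψ x

/-- The function `φ` read in logarithmic coordinates on its domain and its range. -/
noncomputable def logConj (φ : ℝ → ℝ) (v : ℝ) : ℝ := log (φ (exp v))

section Schur

variable {X Y : Type*} [MeasurableSpace X] [MeasurableSpace Y] {μ : Measure X} {ν : Measure Y}
  [SFinite μ] [SFinite ν]

lemma mul_lintegral_le_mul_lintegral_of_rel {R : X → Y → Prop}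
    (hR : MeasurableSet {p : X × Y | R p.1 p.2}) {f : X → ENNReal} {g : Y → ENNReal}
    (hg : Measurable g) (hfg : ∀ x y, R x y → f x ≤ g y) {c C : ENNReal}
    (hc : ∀ x, c ≤ ν {y | R x y}) (hC : ∀ y, μ {x | R x y} ≤ C) :
    c * ∫⁻ x, f x ∂μ ≤ C * ∫⁻ y, g y ∂ν := by
  have hsec : ∀ x, MeasurableSet {y | R x y} := fun x => measurable_prodMk_left hR
  have hsec' : ∀ y, MeasurableSet {x | R x y} := fun y => measurable_prodMk_right hR
  have hmeas : Measurable (Function.uncurry fun x y => {y | R x y}.indicator g y) :=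
    (hg.comp measurable_snd).indicator hR
  calc c * ∫⁻ x, f x ∂μ ≤ ∫⁻ x, c * f x ∂μ := lintegral_const_mul_le _ _
    _ ≤ ∫⁻ x, ∫⁻ y, {y | R x y}.indicator g y ∂ν ∂μ := by
        refine lintegral_mono fun x => ?_
        calc c * f x ≤ f x * ν {y | R x y} := by rw [mul_comm]; gcongr; exact hc x
          _ = ∫⁻ _ in {y | R x y}, f x ∂ν := (setLIntegral_const _ _).symm
          _ ≤ ∫⁻ y in {y | R x y}, g y ∂ν := setLIntegral_mono hg fun y hy => hfg x y hy
          _ = _ := (lintegral_indicator (hsec x) g).symm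
    _ = ∫⁻ y, ∫⁻ x, {x | R x y}.indicator (fun _ => g y) x ∂μ ∂ν :=
        lintegral_lintegral_swap hmeas.aemeasurable
    _ ≤ ∫⁻ y, C * g y ∂ν := by
        refine lintegral_mono fun y => ?_
        rw [lintegral_indicator_const (hsec' y), mul_comm]
        gcongr
        exact hC y
    _ = C * ∫⁻ y, g y ∂ν := lintegral_const_mul _ hg

end Schur

namespace CoarselyExpandingOn

variable {γ γ' A A' B r : ℝ} {ψ : ℝ → ℝ} {S : Set ℝ}

lemma error_nonneg (h : CoarselyExpandingOn γ A ψ S) (hS : S.Nonempty) : 0 ≤ A := by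
  obtain ⟨x, hx⟩ := hS
  linarith [h x hx x hx le_rfl]

lemma mono_rate (h : CoarselyExpandingOn γ A ψ S) (hγ : γ' ≤ γ) :
    CoarselyExpandingOn γ' A ψ S := fun x hx y hy hxy => by
  have : γ' * (y - x) ≤ γ * (y - x) := mul_le_mul_of_nonneg_right hγ (sub_nonneg.2 hxy)
  linarith [h x hx y hy hxy]

lemma univ_of_Ici_of_reflect (hpos : CoarselyExpandingOn γ A ψ (Ici 0))
    (hneg : CoarselyExpandingOn γ A' (fun x => -ψ (-x)) (Ici 0)) :
    CoarselyExpandingOn γ (A + A') ψ univ := by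
  have hA : 0 ≤ A := hpos.error_nonneg nonempty_Ici
  have hA' : 0 ≤ A' := hneg.error_nonneg nonempty_Ici
  have hIic : ∀ x y, x ≤ y → y ≤ 0 → γ * (y - x) - A' ≤ ψ y - ψ x := fun x y hxy hy => by
    have := hneg (-y) (neg_nonneg.2 hy) (-x) (neg_nonneg.2 (hxy.trans hy)) (neg_le_neg hxy)
    simp only [neg_neg] at this
    linarith
  intro x _ y _ hxy
  rcases le_total 0 x with hx | hx
  · linarith [hpos x hx y (hx.trans hxy) hxy]
  rcases le_total y 0 with hy | hy
  · linarith [hIic x y hxy hy]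
  · linarith [hpos 0 self_mem_Ici y hy hy, hIic x 0 hx le_rfl]

lemma le_add (h : CoarselyExpandingOn γ A ψ S) (hγ : 0 ≤ γ) {x y : ℝ} (hx : x ∈ S) (hy : y ∈ S)
    (hxy : x ≤ y) : ψ x ≤ ψ y + A := by
  linarith [h x hx y hy hxy, mul_nonneg hγ (sub_nonneg.2 hxy)]

lemma mul_dist_le (h : CoarselyExpandingOn γ A ψ S) {x y : ℝ} (hx : x ∈ S) (hy : y ∈ S) :
    γ * dist x y ≤ dist (ψ x) (ψ y) + A := by
  wlog hxy : x ≤ y generalizing x y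
  · rw [dist_comm x, dist_comm (ψ x)]
    exact this hy hx (le_of_not_ge hxy)
  rw [dist_comm x, dist_comm (ψ x), Real.dist_eq, Real.dist_eq, abs_of_nonneg (sub_nonneg.2 hxy)]
  linarith [h x hx y hy hxy, le_abs_self (ψ y - ψ x)]

lemma volume_setOf_dist_le_le (h : CoarselyExpandingOn γ A ψ univ) (hγ : 0 < γ) (y r : ℝ) :
    volume {x | dist (ψ x) y ≤ r} ≤ ENNReal.ofReal ((2 * r + A) / γ) := by
  refine (Real.volume_le_diam _).trans (Metric.ediam_le fun x hx z hz => ?_)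
  rw [edist_dist]
  refine ENNReal.ofReal_le_ofReal ((le_div_iff₀' hγ).2 ?_)
  have : dist (ψ x) (ψ z) ≤ r + r := (dist_triangle_right _ _ y).trans (add_le_add hx hz)
  linarith [h.mul_dist_le (mem_univ x) (mem_univ z)]

lemma exists_int_le_lt (h : CoarselyExpandingOn γ A ψ univ) (hγ : 0 < γ) (y : ℝ) :
    ∃ n : ℤ, ψ n ≤ y ∧ y < ψ (n + 1) := by
  have hbdd : ∃ N : ℤ, ∀ m : ℤ, ψ m ≤ y → m ≤ N := by
    obtain ⟨N, hN⟩ := exists_nat_gt ((y - ψ 0 + A) / γ)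
    rw [div_lt_iff₀' hγ] at hN
    refine ⟨N, fun m hm => ?_⟩
    by_contra! hlt
    have hNm : (N : ℝ) < m := mod_cast hlt
    have := h 0 (mem_univ _) m (mem_univ _) ((Nat.cast_nonneg N).trans hNm.le)
    linarith [mul_lt_mul_of_pos_left hNm hγ]
  have hne : ∃ n : ℤ, ψ n ≤ y := by
    obtain ⟨N, hN⟩ := exists_nat_gt ((ψ 0 - y + A) / γ)
    rw [div_lt_iff₀' hγ] at hN
    refine ⟨-N, ?_⟩
    have := h (-N) (mem_univ _) 0 (mem_univ _) (by simp)
    push_cast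
    linarith
  obtain ⟨n, hn, hmax⟩ := Int.exists_greatest_of_bdd hbdd hne
  refine ⟨n, hn, lt_of_not_ge fun hle => ?_⟩
  have := hmax (n + 1) (by exact_mod_cast hle)
  lia

lemma one_le_volume_setOf_dist_le (h : CoarselyExpandingOn γ A ψ univ) (hγ : 0 < γ)
    (hB : ∀ n : ℤ, ψ (n + 1) ≤ ψ n + B) (y : ℝ) :
    1 ≤ volume {x | dist (ψ x) y ≤ A + B} := by
  obtain ⟨n, hn, hn'⟩ := h.exists_int_le_lt hγ y
  calc (1 : ENNReal) = volume (Icc (n : ℝ) (n + 1)) := by simp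
    _ ≤ _ := measure_mono fun x hx => ?_
  have hleft := h.le_add hγ.le (mem_univ _) (mem_univ _) hx.1
  have hright := h.le_add hγ.le (mem_univ _) (mem_univ _) hx.2
  rw [mem_ofPred_eq, Real.dist_eq, abs_le]
  constructor <;> linarith [hB n]

lemma mul_lintegral_comp_le (h : CoarselyExpandingOn γ A ψ univ) (hγ : 0 < γ) (hψ : Measurable ψ)
    {G : ℝ → ENNReal} (hG : Measurable G) {D : ENNReal}
    (hGD : ∀ y z, dist y z ≤ r → G y ≤ D * G z) :
    ENNReal.ofReal (2 * r) * ∫⁻ x, G (ψ x)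
      ≤ ENNReal.ofReal ((2 * r + A) / γ) * (D * ∫⁻ y, G y) := by
  rw [← lintegral_const_mul D hG]
  refine mul_lintegral_le_mul_lintegral_of_rel (R := fun x y => dist (ψ x) y ≤ r)
    (measurableSet_le (by fun_prop) measurable_const) (hG.const_mul D)
    (fun x y => hGD (ψ x) y) (fun x => ?_) fun y => h.volume_setOf_dist_le_le hγ y r
  rw [← Real.volume_closedBall (ψ x)]
  exact measure_mono fun y hy => (dist_comm _ _).trans_le hy

lemma lintegral_le_mul_lintegral_comp (h : CoarselyExpandingOn γ A ψ univ) (hγ : 0 < γ)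
    (hψ : Measurable ψ) (hB : ∀ n : ℤ, ψ (n + 1) ≤ ψ n + B) (hr : A + B ≤ r)
    {G : ℝ → ENNReal} (hG : Measurable G) {D : ENNReal}
    (hGD : ∀ y z, dist y z ≤ r → G y ≤ D * G z) :
    ∫⁻ y, G y ≤ ENNReal.ofReal (2 * r) * (D * ∫⁻ x, G (ψ x)) := by
  have hGψ : Measurable fun x => G (ψ x) := hG.comp hψ
  rw [← lintegral_const_mul D hGψ, ← one_mul (∫⁻ y, G y)]
  refine mul_lintegral_le_mul_lintegral_of_rel (R := fun y x => dist (ψ x) y ≤ r)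
    (measurableSet_le (by fun_prop) measurable_const) (hGψ.const_mul D)
    (fun y x hyx => hGD y (ψ x) ((dist_comm _ _).trans_le hyx)) (fun y => ?_) fun x => ?_
  · exact (h.one_le_volume_setOf_dist_le hγ hB y).trans (measure_mono fun x hx => hx.trans hr)
  · rw [← Real.volume_closedBall (ψ x)]
    exact measure_mono fun y hy => (dist_comm _ _).trans_le hy

lemma exists_lintegral_comp_comparable (h : CoarselyExpandingOn γ A ψ univ) (hγ : 0 < γ)
    (hψ : Measurable ψ) (hB : ∀ n : ℤ, ψ (n + 1) ≤ ψ n + B) :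
    ∃ r, ∀ D > (0 : ℝ), ∃ K > (0 : ℝ), ∀ G : ℝ → ENNReal, Measurable G →
      (∀ y z, dist y z ≤ r → G y ≤ ENNReal.ofReal D * G z) →
      ∫⁻ y, G y ≤ ENNReal.ofReal K * ∫⁻ x, G (ψ x) ∧
      ∫⁻ x, G (ψ x) ≤ ENNReal.ofReal K * ∫⁻ y, G y := by
  have := h.error_nonneg univ_nonempty
  have hr : (1 : ℝ) ≤ 2 * max (A + B) 1 := by linarith [le_max_right (A + B) 1]
  set r := max (A + B) 1
  refine ⟨r, fun D hD => ⟨max (2 * r) ((2 * r + A) / γ) * D, by positivity, fun G hG hGD => ?_⟩⟩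
  rw [ENNReal.ofReal_mul (by positivity), mul_assoc, mul_assoc]
  constructor
  · refine (h.lintegral_le_mul_lintegral_comp hγ hψ hB (le_max_left _ _) hG hGD).trans ?_
    gcongr
    exact le_max_left _ _
  · calc ∫⁻ x, G (ψ x) ≤ ENNReal.ofReal (2 * r) * ∫⁻ x, G (ψ x) :=
          le_mul_of_one_le_left zero_le (ENNReal.one_le_ofReal.2 hr)
      _ ≤ _ := h.mul_lintegral_comp_le hγ hψ hG hGD
      _ ≤ _ := by gcongr; exact le_max_right _ _

end CoarselyExpandingOn

section LogarithmicForm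

variable {f g : ℝ → ℝ} {S : Set ℝ} {a : ℝ}

lemma AlmostDecreasingOn.exists_log_le (h : AlmostDecreasingOn (fun u => u ^ a * f u) S)
    (hS : S ⊆ Ioi 0) (hf : ∀ u ∈ S, 0 < f u) :
    ∃ A, ∀ s ∈ S, ∀ t ∈ S, s ≤ t → a * log t + log (f t) ≤ A + (a * log s + log (f s)) := by
  obtain ⟨C, hC, hle⟩ := h
  refine ⟨log C, fun s hs t ht hst => ?_⟩
  have hs0 : 0 < s ^ a := rpow_pos_of_pos (hS hs) a
  have ht0 : 0 < t ^ a := rpow_pos_of_pos (hS ht) a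
  have := log_le_log (mul_pos ht0 (hf t ht)) (hle s hs t ht hst)
  rwa [log_mul hC.ne' (mul_pos hs0 (hf s hs)).ne', log_mul hs0.ne' (hf s hs).ne',
    log_mul ht0.ne' (hf t ht).ne', log_rpow (hS hs), log_rpow (hS ht)] at this

lemma AlmostIncreasingOn.exists_log_le (h : AlmostIncreasingOn (fun u => u ^ a * f u) S)
    (hS : S ⊆ Ioi 0) (hf : ∀ u ∈ S, 0 < f u) :
    ∃ A, ∀ s ∈ S, ∀ t ∈ S, s ≤ t → a * log s + log (f s) ≤ A + (a * log t + log (f t)) := by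
  obtain ⟨C, hC, hle⟩ := h
  refine ⟨log C, fun s hs t ht hst => ?_⟩
  have hs0 : 0 < s ^ a := rpow_pos_of_pos (hS hs) a
  have ht0 : 0 < t ^ a := rpow_pos_of_pos (hS ht) a
  have := log_le_log (mul_pos hs0 (hf s hs)) (hle s hs t ht hst)
  rwa [log_mul hC.ne' (mul_pos ht0 (hf t ht)).ne', log_mul hs0.ne' (hf s hs).ne',
    log_mul ht0.ne' (hf t ht).ne', log_rpow (hS hs), log_rpow (hS ht)] at this

lemma EquivOn.exists_abs_log_sub_log_le (h : EquivOn f g S) (hf : ∀ x ∈ S, 0 < f x)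
    (hg : ∀ x ∈ S, 0 < g x) : ∃ Q, ∀ x ∈ S, |log (f x) - log (g x)| ≤ Q := by
  obtain ⟨c, hc, C, hC, hle⟩ := h
  refine ⟨max (log C) (-log c), fun x hx => ?_⟩
  have hlower := log_le_log (mul_pos hc (hg x hx)) (hle x hx).1
  have hupper := log_le_log (hf x hx) (hle x hx).2
  rw [log_mul hc.ne' (hg x hx).ne'] at hlower
  rw [log_mul hC.ne' (hg x hx).ne'] at hupper
  rw [abs_le]
  constructor <;> linarith [le_max_left (log C) (-log c), le_max_right (log C) (-log c)]

end LogarithmicForm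

namespace IsPowerControlled

variable {C C' ε ε' : ℝ} {f g : ℝ → ℝ}

lemma mul (hf : IsPowerControlled C ε f) (hg : IsPowerControlled C' ε' g)
    (hf0 : ∀ t ∈ Ioi (0 : ℝ), 0 ≤ f t) (hg0 : ∀ t ∈ Ioi (0 : ℝ), 0 ≤ g t) :
    IsPowerControlled (C * C') (ε + ε') (fun t => f t * g t) := fun s hs t ht =>
  calc f s * g s
      ≤ (C * exp (ε * |log s - log t|) * f t) * (C' * exp (ε' * |log s - log t|) * g t) :=
        mul_le_mul (hf s hs t ht) (hg s hs t ht) (hg0 s hs) ((hf0 s hs).trans (hf s hs t ht))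
    _ = C * C' * exp ((ε + ε') * |log s - log t|) * (f t * g t) := by
        rw [add_mul, exp_add]; ring

lemma rpow (a : ℝ) : IsPowerControlled 1 |a| (fun t => t ^ a) := fun s hs t ht => by
  simp only [one_mul]
  rw [rpow_def_of_pos hs, rpow_def_of_pos ht, ← exp_add, exp_le_exp]
  have : (log s - log t) * a ≤ |a| * |log s - log t| := by
    rw [← abs_mul, mul_comm a]; exact le_abs_self _
  linarith

lemma of_quasiconcave {k : ℝ → ℝ} (hk : ∀ t ∈ Ioi (0 : ℝ), 0 ≤ k t) (hmono : MonotoneOn k (Ioi 0))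
    (hanti : AntitoneOn (fun t => k t / t) (Ioi 0)) : IsPowerControlled 1 1 k := by
  intro s hs t ht
  rw [one_mul, one_mul]
  rcases le_total s t with hst | hts
  · exact (hmono hs ht hst).trans (le_mul_of_one_le_left (hk t ht) (one_le_exp (abs_nonneg _)))
  · rw [abs_of_nonneg (sub_nonneg.2 (log_le_log ht hts)), exp_sub, exp_log hs, exp_log ht,
      div_mul_comm]
    exact (div_le_iff₀ hs).1 (hanti ht hs hts)

lemma exists_of_almostIncreasingOn_of_almostDecreasingOn (hf : ∀ t ∈ Ioi (0 : ℝ), 0 < f t)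
    (hinc : AlmostIncreasingOn (fun t => t ^ ε * f t) (Ioi 0))
    (hdec : AlmostDecreasingOn (fun t => t ^ (-ε) * f t) (Ioi 0)) :
    ∃ C, IsPowerControlled C ε f := by
  obtain ⟨A, hA⟩ := hinc.exists_log_le subset_rfl hf
  obtain ⟨A', hA'⟩ := hdec.exists_log_le subset_rfl hf
  refine ⟨exp (max A A'), fun s hs t ht => ?_⟩
  rw [← log_le_log_iff (hf s hs) (by have := hf t ht; positivity), ← exp_add,
    log_mul (exp_pos _).ne' (hf t ht).ne', log_exp]
  rcases le_total s t with hst | hts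
  · rw [abs_of_nonpos (sub_nonpos.2 (log_le_log hs hst))]
    linarith [hA s hs t ht hst, le_max_left A A']
  · rw [abs_of_nonneg (sub_nonneg.2 (log_le_log ht hts))]
    linarith [hA' t ht s hs hts, le_max_right A A']

lemma one_le_const (hf : IsPowerControlled C ε f) {t : ℝ} (ht : 0 < t) (hft : 0 < f t) :
    1 ≤ C := by
  have := hf t ht t ht
  rw [sub_self, abs_zero, mul_zero, exp_zero, mul_one] at this
  exact (le_mul_iff_one_le_left hft).1 this

lemma ofReal_rpow_comp_exp_le (hf : IsPowerControlled C ε f) (hC : 0 < C) {q : ℝ} (hq : 0 ≤ q)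
    {r y z : ℝ} (hyz : dist y z ≤ r) :
    ENNReal.ofReal (f (exp y)) ^ q
      ≤ ENNReal.ofReal ((C * exp (|ε| * r)) ^ q) * ENNReal.ofReal (f (exp z)) ^ q := by
  have hD : 0 < C * exp (ε * |y - z|) := by positivity
  have hDr : C * exp (ε * |y - z|) ≤ C * exp (|ε| * r) := by
    gcongr
    · exact le_abs_self ε
    · exact hyz
  have hle := hf _ (exp_pos y) _ (exp_pos z)
  rw [log_exp, log_exp] at hle
  rw [← ENNReal.ofReal_rpow_of_pos (hD.trans_le hDr), ← ENNReal.mul_rpow_of_nonneg _ _ hq]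
  refine ENNReal.rpow_le_rpow ?_ hq
  calc ENNReal.ofReal (f (exp y)) ≤ ENNReal.ofReal (C * exp (ε * |y - z|) * f (exp z)) :=
        ENNReal.ofReal_le_ofReal hle
    _ = ENNReal.ofReal (C * exp (ε * |y - z|)) * ENNReal.ofReal (f (exp z)) :=
        ENNReal.ofReal_mul hD.le
    _ ≤ _ := by gcongr

end IsPowerControlled

section Sinh

lemma abs_log_one_add_sinh_sub_le {x : ℝ} (hx : 0 ≤ x) : |log (1 + sinh x) - x| ≤ log 2 := by
  have := sinh_nonneg_iff.2 hx
  have hexp : 1 ≤ exp x := one_le_exp hx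
  have hexp_neg : exp (-x) ≤ 1 := exp_le_one_iff.2 (neg_nonpos.2 hx)
  have hlower : log (exp x) ≤ log (2 * (1 + sinh x)) :=
    log_le_log (exp_pos x) (by rw [sinh_eq]; linarith)
  have hupper : log (1 + sinh x) ≤ log (2 * exp x) :=
    log_le_log (by positivity) (by rw [sinh_eq]; linarith [exp_pos (-x)])
  rw [log_exp, log_mul two_ne_zero (by positivity)] at hlower
  rw [log_mul two_ne_zero (exp_pos x).ne', log_exp] at hupper
  rw [abs_le]
  constructor <;> linarith

lemma sinh_add_one_le {x : ℝ} (hx : 1 ≤ x) : sinh (x + 1) ≤ 4 * sinh x := by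
  have hsinh : 1 ≤ sinh x := hx.trans (self_le_sinh_iff.2 (zero_le_one.trans hx))
  have hcosh : cosh x ≤ sinh x + 1 / 2 := by
    have : exp (-x) ≤ 1 / 2 := by
      rw [exp_neg, inv_le_comm₀ (exp_pos x) (by norm_num)]
      linarith [add_one_le_exp x]
    linarith [cosh_sub_sinh x]
  have hsum : cosh 1 + sinh 1 = exp 1 := cosh_add_sinh 1
  have hlt : sinh 1 < cosh 1 := sinh_lt_cosh 1
  have hsinh_one : 0 ≤ sinh (1 : ℝ) := sinh_nonneg_iff.2 zero_le_one
  rw [sinh_add]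
  nlinarith [exp_one_lt_d9]

lemma cosh_le_one_add_abs_sinh (x : ℝ) : cosh x ≤ 1 + |sinh x| := by
  refine le_of_sq_le_sq ?_ (by positivity)
  rw [cosh_sq, ← sq_abs (sinh x)]
  linarith [abs_nonneg (sinh x)]

lemma one_add_abs_sinh_le_two_mul_cosh (x : ℝ) : 1 + |sinh x| ≤ 2 * cosh x := by
  have : |sinh x| ≤ cosh x := by
    rw [abs_sinh, ← cosh_abs]
    exact (sinh_lt_cosh _).le
  linarith [one_le_cosh x]

lemma coarselyExpandingOn_comp_sinh {g : ℝ → ℝ} {γ A : ℝ} (hγ : 0 ≤ γ)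
    (hg : ∀ v w, 0 ≤ v → v ≤ w → γ * (log (1 + w) - log (1 + v)) - A ≤ g w - g v) :
    CoarselyExpandingOn γ (A + γ * (2 * log 2)) (fun x => g (sinh x)) (Ici 0) := by
  intro x hx y hy hxy
  have hlogx := abs_le.1 (abs_log_one_add_sinh_sub_le hx)
  have hlogy := abs_le.1 (abs_log_one_add_sinh_sub_le hy)
  have hlog : γ * (y - x - 2 * log 2) ≤ γ * (log (1 + sinh y) - log (1 + sinh x)) :=
    mul_le_mul_of_nonneg_left (by linarith) hγ
  linarith [hg _ _ (sinh_nonneg_iff.2 hx) (sinh_le_sinh.2 hxy)]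

variable {g : ℝ → ℝ} {A Q : ℝ}

lemma exists_apply_sinh_nat_succ_le (hg : ∀ v w, 0 ≤ v → v ≤ w → g v ≤ g w + A)
    (hdouble : ∀ v, 0 ≤ v → g (2 * v) ≤ g v + Q) :
    ∃ B, ∀ n : ℕ, g (sinh (n + 1)) ≤ g (sinh n) + B := by
  -- Doubling fixes `0`, so it says nothing about the first increment.
  refine ⟨max (2 * Q + A) (g (sinh 1) - g 0), fun n => ?_⟩
  rcases n.eq_zero_or_pos with rfl | hn
  · simp only [Nat.cast_zero, zero_add, sinh_zero]
    linarith [le_max_right (2 * Q + A) (g (sinh 1) - g 0)]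
  · have hsinh : 0 ≤ sinh (n : ℝ) := sinh_nonneg_iff.2 n.cast_nonneg
    have hquad : g (2 * (2 * sinh n)) ≤ g (sinh n) + 2 * Q := by
      linarith [hdouble (sinh n) hsinh, hdouble (2 * sinh n) (by positivity)]
    have hstep : g (sinh (n + 1)) ≤ g (2 * (2 * sinh n)) + A :=
      hg _ _ (sinh_nonneg_iff.2 (by positivity))
        (by linarith [sinh_add_one_le (x := n) (by exact_mod_cast hn)])
    linarith [le_max_left (2 * Q + A) (g (sinh 1) - g 0)]

lemma exists_apply_sinh_int_succ_le (hg : ∀ v w, v ≤ w → g v ≤ g w + A)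
    (hdouble : ∀ v, |g (2 * v) - g v| ≤ Q) :
    ∃ B, ∀ n : ℤ, g (sinh (n + 1)) ≤ g (sinh n) + B := by
  obtain ⟨B, hB⟩ := exists_apply_sinh_nat_succ_le (fun v w _ => hg v w)
    fun v _ => by linarith [(abs_le.1 (hdouble v)).2]
  obtain ⟨B', hB'⟩ := exists_apply_sinh_nat_succ_le (g := fun v => -g (-v)) (A := A) (Q := Q)
    (fun v w _ hvw => by linarith [hg (-w) (-v) (neg_le_neg hvw)])
    fun v _ => by
      rw [← mul_neg]
      linarith [(abs_le.1 (hdouble (-v))).1]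
  refine ⟨max B B', fun n => ?_⟩
  rcases n with m | m
  · simpa using (hB m).trans (add_le_add_right (le_max_left B B') _)
  · have hm := hB' m
    simp only [← sinh_neg] at hm
    rw [Int.cast_negSucc, Nat.cast_succ, neg_add_rev, add_right_comm, neg_add_cancel, zero_add,
      ← neg_add_rev]
    linarith [le_max_right B B']

end Sinh

section LogConj

variable {φ : ℝ → ℝ} {α β : ℝ}

lemma inv_one_add_mem_Ioc {v : ℝ} (hv : 0 ≤ v) : (1 + v)⁻¹ ∈ Ioc (0 : ℝ) 1 :=
  ⟨by positivity, inv_le_one_of_one_le₀ (by linarith)⟩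

lemma exists_logConj_growth_of_assocBinf (hφ : ∀ t ∈ Ioi (0 : ℝ), 0 < φ t)
    (h : AlmostDecreasingOn (fun u => u ^ (-α) * assocBinf φ u) (Ioc 0 1)) :
    ∃ A, ∀ v w, 0 ≤ v → v ≤ w →
      -α * (log (1 + w) - log (1 + v)) - A ≤ logConj φ w - logConj φ v := by
  obtain ⟨A, hA⟩ := h.exists_log_le (fun u hu => hu.1) fun u _ => hφ _ (exp_pos _)
  refine ⟨A, fun v w hv hvw => ?_⟩
  have := hA _ (inv_one_add_mem_Ioc (hv.trans hvw)) _ (inv_one_add_mem_Ioc hv)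
    (inv_anti₀ (by positivity) (by linarith))
  simp only [assocBinf, one_div, inv_inv, add_sub_cancel_left, log_inv] at this
  simp only [logConj]
  linarith

lemma exists_logConj_growth_of_assocB0 (hφ : ∀ t ∈ Ioi (0 : ℝ), 0 < φ t)
    (h : AlmostIncreasingOn (fun u => u ^ (-β) * assocB0 φ u) (Ioc 0 1)) :
    ∃ A, ∀ v w, 0 ≤ v → v ≤ w →
      β * (log (1 + w) - log (1 + v)) - A ≤ logConj φ (-v) - logConj φ (-w) := by
  obtain ⟨A, hA⟩ := h.exists_log_le (fun u hu => hu.1) fun u _ => hφ _ (exp_pos _)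
  refine ⟨A, fun v w hv hvw => ?_⟩
  have := hA _ (inv_one_add_mem_Ioc (hv.trans hvw)) _ (inv_one_add_mem_Ioc hv)
    (inv_anti₀ (by positivity) (by linarith))
  simp only [assocB0, one_div, inv_inv, sub_add_cancel_left, log_inv] at this
  simp only [logConj]
  linarith

lemma exists_coarselyExpandingOn_logConj_sinh (hφ : ∀ t ∈ Ioi (0 : ℝ), 0 < φ t)
    (hα : α < 0) (hβ : 0 < β)
    (hΦinf : AlmostDecreasingOn (fun u => u ^ (-α) * assocBinf φ u) (Ioc 0 1))
    (hΦ0 : AlmostIncreasingOn (fun u => u ^ (-β) * assocB0 φ u) (Ioc 0 1)) :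
    ∃ γ > 0, ∃ A, CoarselyExpandingOn γ A (fun x => logConj φ (sinh x)) univ := by
  obtain ⟨A, hA⟩ := exists_logConj_growth_of_assocBinf hφ hΦinf
  obtain ⟨A', hA'⟩ := exists_logConj_growth_of_assocB0 hφ hΦ0
  have hpos := coarselyExpandingOn_comp_sinh (neg_nonneg.2 hα.le) hA
  have hneg := coarselyExpandingOn_comp_sinh (g := fun v => -logConj φ (-v)) hβ.le
    fun v w hv hvw => by simpa only [neg_sub_neg] using hA' v w hv hvw
  simp only [← sinh_neg] at hneg
  exact ⟨min (-α) β, lt_min (neg_pos.2 hα) hβ, _,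
    (hpos.mono_rate (min_le_left _ _)).univ_of_Ici_of_reflect
      (hneg.mono_rate (min_le_right _ _))⟩

lemma exists_abs_logConj_two_mul_sub_le (hφ : ∀ t ∈ Ioi (0 : ℝ), 0 < φ t)
    (hsq : EquivOn (fun t => φ (t ^ 2)) φ (Ioi 0)) :
    ∃ Q, ∀ v, |logConj φ (2 * v) - logConj φ v| ≤ Q := by
  obtain ⟨Q, hQ⟩ := hsq.exists_abs_log_sub_log_le (fun t ht => hφ _ (pow_pos (mem_Ioi.1 ht) 2)) hφ
  refine ⟨Q, fun v => ?_⟩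
  simpa only [logConj, ← exp_nat_mul, Nat.cast_ofNat] using hQ (exp v) (exp_pos v)

lemma exists_logConj_sinh_int_succ_le (hφ : ∀ t ∈ Ioi (0 : ℝ), 0 < φ t)
    (hsq : EquivOn (fun t => φ (t ^ 2)) φ (Ioi 0)) {γ A : ℝ} (hγ : 0 ≤ γ)
    (h : CoarselyExpandingOn γ A (fun x => logConj φ (sinh x)) univ) :
    ∃ B, ∀ n : ℤ, logConj φ (sinh (n + 1)) ≤ logConj φ (sinh n) + B := by
  obtain ⟨Q, hQ⟩ := exists_abs_logConj_two_mul_sub_le hφ hsq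
  refine exists_apply_sinh_int_succ_le (A := A) (fun v w hvw => ?_) hQ
  simpa only [sinh_arsinh] using
    h.le_add hγ (mem_univ (arsinh v)) (mem_univ (arsinh w)) (arsinh_le_arsinh.2 hvw)

end LogConj

section ChangeOfVariables

lemma lintegral_Ioi_div_eq_lintegral_comp_exp (h : ℝ → ENNReal) :
    ∫⁻ t in Ioi (0 : ℝ), h t / ENNReal.ofReal t = ∫⁻ y, h (exp y) := by
  rw [← range_exp, ← image_univ, lintegral_image_eq_lintegral_abs_deriv_mul MeasurableSet.univ
    (fun x _ => (hasDerivAt_exp x).hasDerivWithinAt) exp_injective.injOn, setLIntegral_univ]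
  refine lintegral_congr fun y => ?_
  rw [abs_exp]
  exact ENNReal.mul_div_cancel (by simp [exp_pos]) ENNReal.ofReal_ne_top

lemma lintegral_eq_lintegral_cosh_mul_comp_sinh (h : ℝ → ENNReal) :
    ∫⁻ v, h v = ∫⁻ x, ENNReal.ofReal (cosh x) * h (sinh x) := by
  rw [← setLIntegral_univ h, ← sinh_surjective.range_eq, ← image_univ,
    lintegral_image_eq_lintegral_abs_deriv_mul MeasurableSet.univ
      (fun x _ => (hasDerivAt_sinh x).hasDerivWithinAt) sinh_injective.injOn, setLIntegral_univ]
  simp only [abs_of_pos (cosh_pos _)]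

lemma lintegral_Ioi_div_mul_ell_eq (h : ℝ → ENNReal) :
    ∫⁻ t in Ioi (0 : ℝ), h t / ENNReal.ofReal (t * ell t)
      = ∫⁻ x, ENNReal.ofReal (cosh x / (1 + |sinh x|)) * h (exp (sinh x)) := by
  have hsplit : ∀ t ∈ Ioi (0 : ℝ), h t / ENNReal.ofReal (t * ell t)
      = h t / ENNReal.ofReal (ell t) / ENNReal.ofReal t := fun t ht => by
    rw [ENNReal.ofReal_mul (mem_Ioi.1 ht).le, div_eq_mul_inv, div_eq_mul_inv, div_eq_mul_inv,
      ENNReal.mul_inv (.inr ENNReal.ofReal_ne_top) (.inl ENNReal.ofReal_ne_top)]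
    ring
  rw [setLIntegral_congr_fun measurableSet_Ioi hsplit, lintegral_Ioi_div_eq_lintegral_comp_exp,
    lintegral_eq_lintegral_cosh_mul_comp_sinh]
  refine lintegral_congr fun x => ?_
  rw [ell, log_exp, ENNReal.ofReal_div_of_pos (by positivity), div_eq_mul_inv, div_eq_mul_inv]
  ring

lemma lintegral_Ioi_div_mul_ell_le (h : ℝ → ENNReal) :
    ∫⁻ t in Ioi (0 : ℝ), h t / ENNReal.ofReal (t * ell t) ≤ ∫⁻ x, h (exp (sinh x)) := by
  rw [lintegral_Ioi_div_mul_ell_eq]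
  refine lintegral_mono fun x => mul_le_of_le_one_left zero_le ?_
  rw [ENNReal.ofReal_le_one, div_le_one (by positivity)]
  exact cosh_le_one_add_abs_sinh x

lemma lintegral_comp_exp_sinh_le (h : ℝ → ENNReal) :
    ∫⁻ x, h (exp (sinh x)) ≤ 2 * ∫⁻ t in Ioi (0 : ℝ), h t / ENNReal.ofReal (t * ell t) := by
  rw [lintegral_Ioi_div_mul_ell_eq, ← lintegral_const_mul' _ _ ENNReal.ofNat_ne_top]
  refine lintegral_mono fun x => ?_
  rw [← mul_assoc, ← ENNReal.ofReal_ofNat, ← ENNReal.ofReal_mul zero_le_two]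
  refine le_mul_of_one_le_left zero_le ?_
  rw [ENNReal.one_le_ofReal, ← mul_div_assoc, one_le_div (by positivity)]
  exact one_add_abs_sinh_le_two_mul_cosh x

end ChangeOfVariables

lemma exists_lintegral_comparable_of_isPowerControlled {q : ℝ} (hq : 0 < q) {φ : ℝ → ℝ}
    (hφm : Measurable φ) (hφ : ∀ t ∈ Ioi (0 : ℝ), 0 < φ t)
    (hsq : EquivOn (fun t => φ (t ^ 2)) φ (Ioi 0)) {α β : ℝ} (hα : α < 0) (hβ : 0 < β)
    (hΦinf : AlmostDecreasingOn (fun u => u ^ (-α) * assocBinf φ u) (Ioc 0 1))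
    (hΦ0 : AlmostIncreasingOn (fun u => u ^ (-β) * assocB0 φ u) (Ioc 0 1))
    {C : ℝ} (hC : 0 < C) (ε : ℝ) :
    ∃ K > (0 : ℝ), ∀ f : ℝ → ℝ, Measurable ((Ioi 0).domRestrict f) → IsPowerControlled C ε f →
      ∫⁻ t in Ioi (0 : ℝ), ENNReal.ofReal (f t) ^ q / ENNReal.ofReal t
        ≤ ENNReal.ofReal K *
          ∫⁻ t in Ioi (0 : ℝ), ENNReal.ofReal (f (φ t)) ^ q / ENNReal.ofReal (t * ell t) ∧
      ∫⁻ t in Ioi (0 : ℝ), ENNReal.ofReal (f (φ t)) ^ q / ENNReal.ofReal (t * ell t)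
        ≤ ENNReal.ofReal K * ∫⁻ t in Ioi (0 : ℝ), ENNReal.ofReal (f t) ^ q / ENNReal.ofReal t := by
  obtain ⟨γ, hγ, A, hψ⟩ := exists_coarselyExpandingOn_logConj_sinh hφ hα hβ hΦinf hΦ0
  obtain ⟨B, hB⟩ := exists_logConj_sinh_int_succ_le hφ hsq hγ.le hψ
  have hψm : Measurable fun x => logConj φ (sinh x) := by unfold logConj; fun_prop
  obtain ⟨r, hr⟩ := hψ.exists_lintegral_comp_comparable hγ hψm hB
  obtain ⟨K, hK, hcomp⟩ := hr ((C * exp (|ε| * r)) ^ q) (by positivity)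
  refine ⟨K * 2, by positivity, fun f hfm hf => ?_⟩
  have hfexp : Measurable fun y => f (exp y) :=
    hfm.comp (measurable_exp.subtype_mk (h := exp_pos))
  obtain ⟨hle, hge⟩ := hcomp (fun y => ENNReal.ofReal (f (exp y)) ^ q)
    (hfexp.ennreal_ofReal.pow_const q) fun y z => hf.ofReal_rpow_comp_exp_le hC hq.le
  simp only [logConj, exp_log (hφ _ (exp_pos _))] at hle hge
  rw [lintegral_Ioi_div_eq_lintegral_comp_exp fun t => ENNReal.ofReal (f t) ^ q,
    ENNReal.ofReal_mul hK.le, ENNReal.ofReal_ofNat, mul_assoc, mul_assoc]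
  constructor
  · refine hle.trans ?_
    gcongr
    exact lintegral_comp_exp_sinh_le fun t => ENNReal.ofReal (f (φ t)) ^ q
  · refine ((lintegral_Ioi_div_mul_ell_le fun t => ENNReal.ofReal (f (φ t)) ^ q).trans hge).trans ?_
    gcongr
    exact le_mul_of_one_le_left zero_le one_le_two

lemma rpow_le_ofReal_rpow_mul_rpow {X Y : ENNReal} {K p : ℝ} (hK : 0 < K) (hp : 0 ≤ p)
    (h : X ≤ ENNReal.ofReal K * Y) : X ^ p ≤ ENNReal.ofReal (K ^ p) * Y ^ p := by
  rw [← ENNReal.ofReal_rpow_of_pos hK, ← ENNReal.mul_rpow_of_nonneg _ _ hp]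
  exact ENNReal.rpow_le_rpow h hp

theorem change_of_variables_quasiconcave_general {q : ℝ} (hq : 0 < q) {w : ℝ → ℝ}
    (hwm : Measurable w) (hw : ∀ t ∈ Ioi (0 : ℝ), 0 < w t) {C₀ ε : ℝ}
    (hwC : IsPowerControlled C₀ ε w) {φ : ℝ → ℝ} (hφm : Measurable φ)
    (hφ : ∀ t ∈ Ioi (0 : ℝ), 0 < φ t) (hsq : EquivOn (fun t => φ (t ^ 2)) φ (Ioi 0))
    {α β : ℝ} (hα : α < 0) (hβ : 0 < β)
    (hΦinf : AlmostDecreasingOn (fun u => u ^ (-α) * assocBinf φ u) (Ioc 0 1))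
    (hΦ0 : AlmostIncreasingOn (fun u => u ^ (-β) * assocB0 φ u) (Ioc 0 1)) :
    ∃ c > (0 : ℝ), ∃ C > (0 : ℝ), ∀ k : ℝ → ℝ,
      (∀ t ∈ Ioi (0 : ℝ), 0 ≤ k t) → MonotoneOn k (Ioi 0) →
      AntitoneOn (fun t => k t / t) (Ioi 0) →
      ENNReal.ofReal c *
          (∫⁻ t in Ioi (0 : ℝ), ENNReal.ofReal (w t * k t) ^ q / ENNReal.ofReal t) ^ (1 / q)
        ≤ (∫⁻ t in Ioi (0 : ℝ),
            ENNReal.ofReal (w (φ t) * k (φ t)) ^ q / ENNReal.ofReal (t * ell t)) ^ (1 / q) ∧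
      (∫⁻ t in Ioi (0 : ℝ),
            ENNReal.ofReal (w (φ t) * k (φ t)) ^ q / ENNReal.ofReal (t * ell t)) ^ (1 / q)
        ≤ ENNReal.ofReal C *
          (∫⁻ t in Ioi (0 : ℝ), ENNReal.ofReal (w t * k t) ^ q / ENNReal.ofReal t) ^ (1 / q) := by
  have hC₀ : 1 ≤ C₀ := hwC.one_le_const one_pos (hw 1 (mem_Ioi.2 one_pos))
  obtain ⟨K, hK, hcomp⟩ := exists_lintegral_comparable_of_isPowerControlled hq hφm hφ hsq hα hβ
    hΦinf hΦ0 (zero_lt_one.trans_le hC₀) (ε + 1)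
  have hp : 0 ≤ 1 / q := by positivity
  refine ⟨(K ^ (1 / q))⁻¹, by positivity, K ^ (1 / q), by positivity, fun k hk hmono hanti => ?_⟩
  have hkm : Measurable ((Ioi 0).domRestrict k) := (monotoneOn_iff_monotone.1 hmono).measurable
  have hwk : IsPowerControlled C₀ (ε + 1) (fun t => w t * k t) := by
    simpa only [mul_one] using
      hwC.mul (.of_quasiconcave hk hmono hanti) (fun t ht => (hw t ht).le) hk
  have hwkm : Measurable ((Ioi 0).domRestrict fun t => w t * k t) :=
    (hwm.comp measurable_subtype_coe).mul hkm
  obtain ⟨hle, hge⟩ := hcomp _ hwkm hwk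
  refine ⟨?_, rpow_le_ofReal_rpow_mul_rpow hK hp hge⟩
  rw [ENNReal.ofReal_inv_of_pos (by positivity), mul_comm, ← div_eq_mul_inv]
  exact ENNReal.div_le_of_le_mul' (rpow_le_ofReal_rpow_mul_rpow hK hp hle)

theorem change_of_variables_quasiconcave (q θ : ℝ) (hq : 1 ≤ q)
    (hθ0 : 0 ≤ θ) (hθ1 : θ ≤ 1)
    (b : ℝ → ℝ) (hb : SlowlyVarying b)
    (φ : ℝ → ℝ) (hφ : SlowlyVarying φ)
    (hsq : EquivOn (fun t => φ (t ^ 2)) φ (Ioi 0))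
    (α β : ℝ) (hα : α < 0) (hβ : 0 < β)
    (hΦinf : AlmostDecreasingOn (fun u => u ^ (-α) * assocBinf φ u) (Ioc 0 1))
    (hΦ0 : AlmostIncreasingOn (fun u => u ^ (-β) * assocB0 φ u) (Ioc 0 1)) :
    ∃ c > (0:ℝ), ∃ C > (0:ℝ), ∀ k : ℝ → ℝ,
      (∀ t ∈ Ioi (0:ℝ), 0 ≤ k t) → MonotoneOn k (Ioi 0) →
      AntitoneOn (fun t => k t / t) (Ioi 0) →
      ENNReal.ofReal c *
          (∫⁻ t in Ioi (0:ℝ),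
            ENNReal.ofReal (t ^ (-θ) * b t * k t) ^ q / ENNReal.ofReal t) ^ (1 / q)
        ≤ (∫⁻ t in Ioi (0:ℝ),
            ENNReal.ofReal (φ t ^ (-θ) * b (φ t) * k (φ t)) ^ q
              / ENNReal.ofReal (t * ell t)) ^ (1 / q) ∧
      (∫⁻ t in Ioi (0:ℝ),
            ENNReal.ofReal (φ t ^ (-θ) * b (φ t) * k (φ t)) ^ q
              / ENNReal.ofReal (t * ell t)) ^ (1 / q)
        ≤ ENNReal.ofReal C *
          (∫⁻ t in Ioi (0:ℝ),
            ENNReal.ofReal (t ^ (-θ) * b t * k t) ^ q / ENNReal.ofReal t) ^ (1 / q) := by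
  obtain ⟨C₀, hbC⟩ := IsPowerControlled.exists_of_almostIncreasingOn_of_almostDecreasingOn hb.2.1
    (hb.2.2 1 one_pos).1 (hb.2.2 1 one_pos).2
  exact change_of_variables_quasiconcave_general (by linarith)
    ((measurable_id.pow_const (-θ)).mul hb.1)
    (fun t ht => mul_pos (rpow_pos_of_pos ht _) (hb.2.1 t ht))
    ((IsPowerControlled.rpow (-θ)).mul hbC (fun t ht => (rpow_pos_of_pos ht _).le)
      fun t ht => (hb.2.1 t ht).le) hφ.1 hφ.2.1 hsq hα hβ hΦinf hΦ0
end
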